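/- Let φ₁, φ₂, φ₃ be real numbers with cos φ_k ≠ 0 for k = 1,2,3, and set φ₀ = 0, t_k = tan φ_k, s₀ = 0, s_k = 1 + t_ℓ t_m for each cyclic permutation (k,ℓ,m) of (1,2,3), and n₀ = 0, n₁ = n₂ = n₃ = 1. Then for every permutation (α,β,γ,δ) of (0,1,2,3): cos(φ_α − φ_β + φ_γ − φ_δ) = (n_α − n_β + n_γ − n_δ)·(s_α − s_β + s_γ − s_δ)·cos φ₁ · cos φ₂ · cos φ₃. -/

import Mathlib

/-- `(φ₀, φ₁, φ₂, φ₃)` with `φ₀ = 0`. -/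
noncomputable def phiVec (φ1 φ2 φ3 : ℝ) : Fin 4 → ℝ := ![0, φ1, φ2, φ3]

/-- `(s₀, s₁, s₂, s₃)` with `s₀ = 0` and `s_k = 1 + tan φ_ℓ tan φ_m`. -/
noncomputable def sVec (φ1 φ2 φ3 : ℝ) : Fin 4 → ℝ :=
  ![0, 1 + Real.tan φ2 * Real.tan φ3, 1 + Real.tan φ3 * Real.tan φ1,
    1 + Real.tan φ1 * Real.tan φ2]

/-- `(n₀, n₁, n₂, n₃) = (0, 1, 1, 1)`. -/
def nVec : Fin 4 → ℝ := ![0, 1, 1, 1]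

/-!
The expression `v (e 0) - v (e 1) + v (e 2) - v (e 3)` is `∑ i, ε i * v i` for signs `ε i = ±1`
with `∑ i, ε i = 0`. Balance gives `∑ i, ε i * n i = -ε 0` and
`∑ i, ε i * s i = -ε 0 + ε 1 * t₂ * t₃ + ε 2 * t₃ * t₁ + ε 3 * t₁ * t₂`, and also
`ε 0 * ε 1 = ε 2 * ε 3` together with its two analogues. The product of the two sums is therefore
`1 - ε 2 * ε 3 * t₂ * t₃ - ε 3 * ε 1 * t₃ * t₁ - ε 1 * ε 2 * t₁ * t₂`, which is the factor
multiplying `cos φ₁ * cos φ₂ * cos φ₃` in the addition formula for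
`cos (ε 1 * φ₁ + ε 2 * φ₂ + ε 3 * φ₃)`.
-/

section Algebra

variable {R : Type*}

theorem alternating_comp_perm_eq_sum [Ring R] (e : Equiv.Perm (Fin 4)) (v : Fin 4 → R) :
    v (e 0) - v (e 1) + v (e 2) - v (e 3) = ∑ i, (-1) ^ (e.symm i : ℕ) * v i := by
  rw [← Equiv.sum_comp e]
  simp [Fin.sum_univ_four, pow_succ, sub_eq_add_neg]

theorem sum_neg_one_pow_perm_eq_zero [Ring R] (e : Equiv.Perm (Fin 4)) :
    ∑ i, (-1 : R) ^ (e i : ℕ) = 0 := by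
  simpa using (alternating_comp_perm_eq_sum e.symm (1 : Fin 4 → R)).symm

theorem mul_eq_mul_of_sum_eq_zero_of_sq_add_sq_eq [CommRing R] [IsAddTorsionFree R] {a b c d : R}
    (hsum : a + b + c + d = 0) (hsq : a ^ 2 + b ^ 2 = c ^ 2 + d ^ 2) : a * b = c * d := by
  refine nsmul_right_injective two_ne_zero ?_
  simp only [nsmul_eq_mul, Nat.cast_ofNat]
  linear_combination (a + b - c - d) * hsum - hsq

end Algebra

section Trigonometry

open Real

variable {a b c x y z : ℝ}

theorem cos_mul_of_sq_eq_one (ha : a ^ 2 = 1) (x : ℝ) : cos (a * x) = cos x := by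
  rcases sq_eq_one_iff.mp ha with rfl | rfl <;> simp

theorem tan_mul_of_sq_eq_one (ha : a ^ 2 = 1) (x : ℝ) : tan (a * x) = a * tan x := by
  rcases sq_eq_one_iff.mp ha with rfl | rfl <;> simp

theorem cos_add_add_eq_tan_mul_cos (hx : cos x ≠ 0) (hy : cos y ≠ 0) (hz : cos z ≠ 0) :
    cos (x + y + z) =
      (1 - tan y * tan z - tan z * tan x - tan x * tan y)
        * (cos x * cos y * cos z) := by
  simp only [cos_add, sin_add, tan_eq_sin_div_cos]
  field_simp
  ring

theorem cos_signed_add_add_eq_tan_mul_cos (ha : a ^ 2 = 1) (hb : b ^ 2 = 1) (hc : c ^ 2 = 1)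
    (hx : cos x ≠ 0) (hy : cos y ≠ 0) (hz : cos z ≠ 0) :
    cos (a * x + b * y + c * z) =
      (1 - b * c * (tan y * tan z) - c * a * (tan z * tan x)
          - a * b * (tan x * tan y))
        * (cos x * cos y * cos z) := by
  rw [cos_add_add_eq_tan_mul_cos]
  · simp only [cos_mul_of_sq_eq_one, tan_mul_of_sq_eq_one, ha, hb, hc]
    ring
  all_goals simpa only [cos_mul_of_sq_eq_one, ha, hb, hc]

end Trigonometry

section BalancedSigns

open Real

variable {ε : Fin 4 → ℝ} (φ1 φ2 φ3 : ℝ)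

theorem sum_mul_phiVec :
    ∑ i, ε i * phiVec φ1 φ2 φ3 i = ε 1 * φ1 + ε 2 * φ2 + ε 3 * φ3 := by
  simp [Fin.sum_univ_four, phiVec]

theorem sum_mul_nVec_of_sum_eq_zero (hsum : ∑ i, ε i = 0) : ∑ i, ε i * nVec i = -ε 0 := by
  rw [Fin.sum_univ_four] at hsum
  simp only [Fin.sum_univ_four, nVec, Matrix.cons_val]
  linear_combination hsum

theorem sum_mul_sVec_of_sum_eq_zero (hsum : ∑ i, ε i = 0) :
    ∑ i, ε i * sVec φ1 φ2 φ3 i =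
      -ε 0 + ε 1 * (tan φ2 * tan φ3) + ε 2 * (tan φ3 * tan φ1)
        + ε 3 * (tan φ1 * tan φ2) := by
  rw [Fin.sum_univ_four] at hsum
  simp only [Fin.sum_univ_four, sVec, Matrix.cons_val]
  linear_combination hsum

theorem sum_mul_nVec_mul_sum_mul_sVec (hsq : ∀ i, ε i ^ 2 = 1) (hsum : ∑ i, ε i = 0) :
    (∑ i, ε i * nVec i) * ∑ i, ε i * sVec φ1 φ2 φ3 i =
      1 - ε 2 * ε 3 * (tan φ2 * tan φ3) - ε 3 * ε 1 * (tan φ3 * tan φ1)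
        - ε 1 * ε 2 * (tan φ1 * tan φ2) := by
  rw [sum_mul_nVec_of_sum_eq_zero hsum, sum_mul_sVec_of_sum_eq_zero φ1 φ2 φ3 hsum]
  rw [Fin.sum_univ_four] at hsum
  have h01 : ε 0 * ε 1 = ε 2 * ε 3 :=
    mul_eq_mul_of_sum_eq_zero_of_sq_add_sq_eq hsum (by simp only [hsq])
  have h02 : ε 0 * ε 2 = ε 3 * ε 1 :=
    mul_eq_mul_of_sum_eq_zero_of_sq_add_sq_eq (by linear_combination hsum) (by simp only [hsq])
  have h03 : ε 0 * ε 3 = ε 1 * ε 2 :=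
    mul_eq_mul_of_sum_eq_zero_of_sq_add_sq_eq (by linear_combination hsum) (by simp only [hsq])
  linear_combination hsq 0 - tan φ2 * tan φ3 * h01
    - tan φ3 * tan φ1 * h02 - tan φ1 * tan φ2 * h03

end BalancedSigns

/-- For every permutation `(α,β,γ,δ)` of `(0,1,2,3)`:
`cos(φ_α − φ_β + φ_γ − φ_δ) = (n_α − n_β + n_γ − n_δ)(s_α − s_β + s_γ − s_δ) ∏ cos φ_k`. -/
theorem stmt_18 (φ1 φ2 φ3 : ℝ)
    (h1 : Real.cos φ1 ≠ 0) (h2 : Real.cos φ2 ≠ 0) (h3 : Real.cos φ3 ≠ 0) :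
    ∀ e : Equiv.Perm (Fin 4),
      Real.cos (phiVec φ1 φ2 φ3 (e 0) - phiVec φ1 φ2 φ3 (e 1)
          + phiVec φ1 φ2 φ3 (e 2) - phiVec φ1 φ2 φ3 (e 3))
        = (nVec (e 0) - nVec (e 1) + nVec (e 2) - nVec (e 3))
          * (sVec φ1 φ2 φ3 (e 0) - sVec φ1 φ2 φ3 (e 1)
              + sVec φ1 φ2 φ3 (e 2) - sVec φ1 φ2 φ3 (e 3))
          * (Real.cos φ1 * Real.cos φ2 * Real.cos φ3) := by
  intro e
  have hsq (i : Fin 4) : ((-1 : ℝ) ^ (e.symm i : ℕ)) ^ 2 = 1 := by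
    rw [pow_right_comm, neg_one_sq, one_pow]
  simp only [alternating_comp_perm_eq_sum]
  rw [sum_mul_nVec_mul_sum_mul_sVec φ1 φ2 φ3 hsq (sum_neg_one_pow_perm_eq_zero e.symm),
    sum_mul_phiVec]
  exact cos_signed_add_add_eq_tan_mul_cos (hsq 1) (hsq 2) (hsq 3) h1 h2 h3
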